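/- A gap in the consistency filtration forces a nonvanishing homotopy group. Precisely: let α_1,…,α_n be nonzero linear forms on ℝ^ℓ with ⋂_{i=1}^n ker α_i = {0}, and for 1 ≤ m ≤ ℓ let Σ_m denote the set of sign vectors ε ∈ {+1,−1}^n such that h(ε) is consistent at every X ∈ L(A) with codim X ≤ m. If for some k ≥ 2 there exists ε ∈ Σ_k ∖ Σ_{k+1}, then π_k(M(A), x_0) is nontrivial (for any basepoint x_0 ∈ M(A)). -/

import Mathlib

noncomputable section

/-- Real vector space `ℝ^ℓ`. -/
abbrev Vsp (ℓ : ℕ) : Type := EuclideanSpace ℝ (Fin ℓ)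

/-- The intersection `X = ⋂ i ∈ I, ker (α i)` as a submodule. -/
def interKer {ℓ n : ℕ} (α : Fin n → (Vsp ℓ →ₗ[ℝ] ℝ)) (I : Finset (Fin n)) :
    Submodule ℝ (Vsp ℓ) :=
  ⨅ i ∈ I, LinearMap.ker (α i)

/-- The system of half-spaces determined by `ε` is consistent at the intersection
`X = ⋂ i ∈ I, ker (α i)`: the intersection of the half-spaces of all hyperplanes
containing `X` is nonempty. -/
def ConsistentAt {ℓ n : ℕ} (α : Fin n → (Vsp ℓ →ₗ[ℝ] ℝ)) (ε : Fin n → ℝ)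
    (I : Finset (Fin n)) : Prop :=
  {x : Vsp ℓ | ∀ j : Fin n, interKer α I ≤ LinearMap.ker (α j) →
      0 < ε j * α j x}.Nonempty

/-- `Σ_m`: the set of sign vectors whose system of half-spaces is consistent at every
intersection of codimension at most `m`. -/
def SigmaFilt {n : ℕ} (ℓ : ℕ) (α : Fin n → (Vsp ℓ →ₗ[ℝ] ℝ)) (m : ℕ) :
    Set (Fin n → ℝ) :=
  {ε | (∀ i, ε i = 1 ∨ ε i = -1) ∧ ∀ I : Finset (Fin n),
    ℓ - Module.finrank ℝ (interKer α I) ≤ m → ConsistentAt α ε I}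

/-- The point `x + √-1 · v` of `ℂ^ℓ` determined by the real vectors `x, v`. -/
def cplx {ℓ : ℕ} (x v : Vsp ℓ) : Fin ℓ → ℂ :=
  fun j => (x j : ℂ) + Complex.I * (v j : ℂ)

/-- The `ℂ`-linear extension of a real linear form, evaluated at `z ∈ ℂ^ℓ`. -/
def cLin {ℓ : ℕ} (α : Vsp ℓ →ₗ[ℝ] ℝ) (z : Fin ℓ → ℂ) : ℂ :=
  (α (WithLp.toLp 2 (fun j => (z j).re)) : ℂ) + Complex.I * (α (WithLp.toLp 2 (fun j => (z j).im)) : ℂ)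

/-- The complexified complement `M(A) ⊆ ℂ^ℓ`. -/
def MA {ℓ n : ℕ} (α : Fin n → (Vsp ℓ →ₗ[ℝ] ℝ)) : Set (Fin ℓ → ℂ) :=
  {z | ∀ i, cLin (α i) z ≠ 0}

/-! Minimality of the gap makes the inconsistent forms at a flat `X` of codimension `k + 1` contain
a positive circuit `C`, whose only relation `∑ lam j ε j α j = 0` has positive coefficients, with
`⋂ j ∈ C, ker (α j) = X`. A complement `s : ℝ × ℝ^k → ℝ^ℓ` of `X` is thus identified by the forms
`lam j ε j α j` with the hyperplane of vectors of coordinate sum zero.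

For `y` on the unit sphere of `ℝ × ℝ^k`, the half-spaces of the hyperplanes that contain `X` and
`s y` are consistent, so a partition of unity yields `v y` such that `s y + i v y` avoids the
complexified hyperplanes through `X`; a large translation along `X` avoids the others. Multiplying
by a complex scalar moves the real part of the basepoint off all hyperplanes, and collapsing every
face of the sphere but one to a point makes the family based.

A null-homotopy would give `ζ : ball → (ℂ \ {0})^C` with `∑ ζ j = 0` everywhere and, on the sphere,
each `ζ j` of positive imaginary part whenever its real part vanishes. The branch of `arg (-i ζ j)`
that is principal on the sphere extends continuously to the ball; it is negative where `ζ j` has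
positive real part, and nonnegative where that is negative. Hence minus the centred vector of
arguments is never opposite to `y` on the sphere, so by the no-retraction theorem it vanishes
somewhere in the ball. There all `ζ j` lie on a common open ray, contradicting `∑ ζ j = 0`.

The no-retraction theorem is Milnor's volume argument: for a `C¹` map `r` that is the identity on
the sphere, `∫ det (1 + t (r' - 1))` over the ball is a polynomial in `t` that equals the volume of
the ball for small `t`, hence also for `t = 1`, where a retraction would give `0`. -/

section Determinants

open MeasureTheory Set Polynomial

/-- Integrating a family of polynomials of bounded degree gives a polynomial in the evaluation
point, so the integral is constant once it is constant on an infinite set. -/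
theorem integral_eval_eq_of_infinite {X : Type*} [MeasurableSpace X] {μ : Measure X} {d : ℕ}
    {P : X → ℝ[X]} (hP : ∀ x, (P x).natDegree ≤ d) {S : Set ℝ} (hS : S.Infinite) {c : ℝ}
    (hint : ∀ t ∈ S, Integrable (fun x => (P x).eval t) μ)
    (hc : ∀ t ∈ S, ∫ x, (P x).eval t ∂μ = c) (s : ℝ) : ∫ x, (P x).eval s ∂μ = c := by
  obtain ⟨T, hTS, hTcard⟩ := hS.exists_subset_card_eq (d + 1)
  have hdeg (x : X) : (P x).degree < T.card := by
    rw [hTcard]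
    exact degree_le_natDegree.trans_lt (by exact_mod_cast Nat.lt_succ_of_le (hP x))
  have hinterp (x : X) :
      (P x).eval s = ∑ t ∈ T, (P x).eval t * (Lagrange.basis T id t).eval s := by
    conv_lhs => rw [Lagrange.eq_interpolate (injOn_id _) (hdeg x)]
    simp [Lagrange.interpolate_apply, eval_finsetSum]
  have hbasis : ∑ t ∈ T, (Lagrange.basis T id t).eval s = 1 := by
    rw [← eval_finsetSum, Lagrange.sum_basis (injOn_id _) (Finset.card_pos.1 (by lia)), eval_one]
  calc ∫ x, (P x).eval s ∂μ
      = ∑ t ∈ T, (∫ x, (P x).eval t ∂μ) * (Lagrange.basis T id t).eval s := by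
        simp_rw [hinterp, ← integral_mul_const]
        exact integral_finsetSum _ fun t ht => (hint t (hTS ht)).mul_const _
    _ = ∑ t ∈ T, c * (Lagrange.basis T id t).eval s :=
        Finset.sum_congr rfl fun t ht => by rw [hc t (hTS ht)]
    _ = c := by rw [← Finset.mul_sum, hbasis, mul_one]

theorem exists_polynomial_eval_eq_det_one_add_smul {K V : Type*} [Field K] [AddCommGroup V]
    [Module K V] [FiniteDimensional K V] (A : V →ₗ[K] V) :
    ∃ P : K[X], P.natDegree ≤ Module.finrank K V ∧
      ∀ t, P.eval t = LinearMap.det (1 + t • A) := by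
  let M := LinearMap.toMatrix (Module.finBasis K V) (Module.finBasis K V) (-A)
  refine ⟨M.charpolyRev, ?_, fun t => ?_⟩
  · rw [← Matrix.reverse_charpoly]
    exact (reverse_natDegree_le _).trans (by simp)
  · rw [Matrix.charpolyRev, ← coe_evalRingHom, RingHom.map_det,
      ← LinearMap.det_toMatrix (Module.finBasis K V)]
    congr 1
    ext i j
    by_cases hij : i = j <;> simp [M, hij, LinearMap.toMatrix_one, mul_comm t]

variable {E : Type*} [NormedAddCommGroup E] [NormedSpace ℝ E] [FiniteDimensional ℝ E]

theorem det_one_add_ne_zero_of_norm_lt_one {A : E →L[ℝ] E} (hA : ‖A‖ < 1) : (1 + A).det ≠ 0 := by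
  have := FiniteDimensional.complete ℝ E
  have hunit : IsUnit (1 + A) := by
    simpa using isUnit_one_sub_of_norm_lt_one (x := -A) (by rwa [norm_neg])
  exact ((hunit.map ContinuousLinearMap.toLinearMapRingHom).map LinearMap.det).ne_zero

theorem det_one_add_pos_of_norm_lt_one {A : E →L[ℝ] E} (hA : ‖A‖ < 1) : 0 < (1 + A).det := by
  have hcont : ContinuousOn (fun s : ℝ => (1 + s • A).det) (Icc 0 1) :=
    (ContinuousLinearMap.continuous_det.comp (by fun_prop)).continuousOn
  by_contra! hneg
  have hzero : (0 : ℝ) ∈ Icc (1 + (1 : ℝ) • A).det (1 + (0 : ℝ) • A).det := by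
    refine ⟨by rwa [one_smul], ?_⟩
    simp [ContinuousLinearMap.det]
  obtain ⟨s, hs, hdet⟩ := intermediate_value_Icc' zero_le_one hcont hzero
  refine det_one_add_ne_zero_of_norm_lt_one (A := s • A) ?_ hdet
  calc ‖s • A‖ = s * ‖A‖ := by rw [norm_smul, Real.norm_of_nonneg hs.1]
    _ ≤ 1 * ‖A‖ := by gcongr; exact hs.2
    _ < 1 := by rwa [one_mul]

end Determinants

section RadialRetraction

variable {E : Type*} [NormedAddCommGroup E] [NormedSpace ℝ E]

/-- The retraction of a normed space onto its closed unit ball along rays from the origin. -/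
def radialRetraction (x : E) : E := (max 1 ‖x‖)⁻¹ • x

theorem max_one_norm_smul_radialRetraction (x : E) : max 1 ‖x‖ • radialRetraction x = x :=
  smul_inv_smul₀ (by positivity) x

theorem radialRetraction_of_norm_le_one {x : E} (hx : ‖x‖ ≤ 1) : radialRetraction x = x := by
  simp [radialRetraction, max_eq_left hx]

theorem norm_radialRetraction_of_one_le_norm {x : E} (hx : 1 ≤ ‖x‖) :
    ‖radialRetraction x‖ = 1 := by
  have : ‖x‖ ≠ 0 := by positivity
  simp [radialRetraction, max_eq_right hx, norm_smul, this]

theorem norm_radialRetraction_le_one (x : E) : ‖radialRetraction x‖ ≤ 1 := by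
  rcases le_total ‖x‖ 1 with hx | hx
  · rwa [radialRetraction_of_norm_le_one hx]
  · exact (norm_radialRetraction_of_one_le_norm hx).le

theorem lipschitzWith_radialRetraction : LipschitzWith 2 (radialRetraction : E → E) := by
  refine LipschitzWith.of_dist_le_mul fun x y => ?_
  rw [dist_eq_norm, dist_eq_norm, NNReal.coe_ofNat]
  set a := max 1 ‖x‖
  set b := max 1 ‖y‖
  have ha : 1 ≤ a := le_max_left _ _
  have hba : |b - a| ≤ ‖x - y‖ := by
    rw [norm_sub_rev]
    refine le_trans ?_ (abs_norm_sub_norm_le y x)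
    simpa only [a, b, max_comm (1 : ℝ)] using abs_max_sub_max_le_abs ‖y‖ ‖x‖ 1
  have hsplit : a • (radialRetraction x - radialRetraction y)
      = (x - y) + (b - a) • radialRetraction y := by
    have hx : a • radialRetraction x = x := max_one_norm_smul_radialRetraction x
    have hy : b • radialRetraction y = y := max_one_norm_smul_radialRetraction y
    linear_combination (norm := module) hx - hy
  calc ‖radialRetraction x - radialRetraction y‖
      ≤ a * ‖radialRetraction x - radialRetraction y‖ := le_mul_of_one_le_left (norm_nonneg _) ha
    _ = ‖(x - y) + (b - a) • radialRetraction y‖ := by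
        rw [← hsplit, norm_smul, Real.norm_of_nonneg (by positivity)]
    _ ≤ ‖x - y‖ + |b - a| * ‖radialRetraction y‖ := by
        rw [← Real.norm_eq_abs, ← norm_smul]; exact norm_add_le _ _
    _ ≤ ‖x - y‖ + ‖x - y‖ * 1 := by gcongr; exact norm_radialRetraction_le_one y
    _ = 2 * ‖x - y‖ := by ring

@[fun_prop]
theorem continuous_radialRetraction : Continuous (radialRetraction : E → E) :=
  lipschitzWith_radialRetraction.continuous

end RadialRetraction

section NoRetraction

open MeasureTheory Metric Set
open scoped NNReal

variable {E : Type*} [NormedAddCommGroup E] [NormedSpace ℝ E]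

theorem bijective_add_of_lipschitzWith [CompleteSpace E] {h : E → E} {K : ℝ≥0} (hK : K < 1)
    (hh : LipschitzWith K h) : Function.Bijective fun x => x + h x := by
  rcases subsingleton_or_nontrivial E with _ | _
  · exact Function.bijective_of_subsingleton _
  have happrox : ApproximatesLinearOn (fun x => x + h x)
      (ContinuousLinearEquiv.refl ℝ E : E →L[ℝ] E) univ K := fun x _ y _ => by
    simpa [add_sub_add_comm] using hh.norm_sub_le x y
  have hK' : Subsingleton E ∨
      K < ‖((ContinuousLinearEquiv.refl ℝ E).symm : E →L[ℝ] E)‖₊⁻¹ := by simp [hK]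
  exact ⟨fun x y hxy => happrox.injOn hK' (mem_univ x) (mem_univ y) hxy, happrox.surjective hK'⟩

variable [FiniteDimensional ℝ E]

theorem det_fderiv_eq_zero_of_norm_eq_one {f : E → E} (hf : ContDiff ℝ 1 f)
    (hf1 : ∀ x, ‖f x‖ = 1) (x : E) : (fderiv ℝ f x).det = 0 := by
  have := FiniteDimensional.complete ℝ E
  by_contra hdet
  have hstrict : HasStrictFDerivAt f
      ((fderiv ℝ f x).toContinuousLinearEquivOfDetNeZero hdet : E →L[ℝ] E) x :=
    hf.contDiffAt.hasStrictFDerivAt one_ne_zero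
  have hrange : range f ∈ nhds (f x) := by
    rw [← hstrict.map_nhds_eq_of_equiv]
    exact Filter.range_mem_map
  have hsub : range f ⊆ sphere 0 1 := range_subset_iff.2 fun y => by simp [hf1]
  have hmem : f x ∈ interior (sphere 0 1) :=
    mem_interior_iff_mem_nhds.2 (Filter.mem_of_superset hrange hsub)
  rwa [interior_sphere _ one_ne_zero] at hmem

section ChangeOfVariables

variable [MeasurableSpace E] [BorelSpace E] (μ : Measure E) [μ.IsAddHaarMeasure]

theorem integral_det_one_add_fderiv_eq_measureReal {U : Set E} (hU : IsOpen U) {h : E → E}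
    {K : ℝ≥0} (hK : K < 1) (hh : LipschitzWith K h) (hdiff : DifferentiableOn ℝ h U)
    (hzero : ∀ x ∉ U, h x = 0) :
    ∫ x in U, (1 + fderiv ℝ h x).det ∂μ = μ.real U := by
  have := FiniteDimensional.complete ℝ E
  have hbij := bijective_add_of_lipschitzWith hK hh
  have himage : (fun x => x + h x) '' U = U := by
    rw [← compl_inj_iff, ← image_compl_eq hbij]
    exact (image_congr fun x hx => by simp [hzero x hx]).trans (image_id' _)
  have hderiv (x : E) (hx : x ∈ U) :
      HasFDerivWithinAt (fun x => x + h x) (1 + fderiv ℝ h x) U x :=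
    ((hasFDerivAt_id x).add
      (hdiff.differentiableAt (hU.mem_nhds hx)).hasFDerivAt).hasFDerivWithinAt
  have hpos (x : E) : 0 < (1 + fderiv ℝ h x).det :=
    det_one_add_pos_of_norm_lt_one ((norm_fderiv_le_of_lipschitz ℝ hh).trans_lt (by simpa))
  have hchange := integral_image_eq_integral_abs_det_fderiv_smul μ hU.measurableSet hderiv
    hbij.1.injOn (fun _ => (1 : ℝ))
  rw [himage] at hchange
  simpa [abs_of_pos (hpos _)] using hchange.symm

theorem integral_ball_det_one_add_fderiv_eq_measureReal {h : E → E} {K : ℝ≥0} (hK : K * 2 < 1)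
    (hh : LipschitzOnWith K h (closedBall 0 1)) (hdiff : DifferentiableOn ℝ h (ball 0 1))
    (hzero : ∀ x ∈ sphere 0 1, h x = 0) :
    ∫ x in ball (0 : E) 1, (1 + fderiv ℝ h x).det ∂μ = μ.real (ball (0 : E) 1) := by
  have hLip : LipschitzWith (K * 2) (h ∘ radialRetraction) := lipschitzOnWith_univ.1 <|
    hh.comp lipschitzWith_radialRetraction.lipschitzOnWith fun x _ =>
      mem_closedBall_zero_iff.2 (norm_radialRetraction_le_one x)
  have heq : EqOn (h ∘ radialRetraction) h (ball 0 1) := fun x hx =>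
    congrArg h (radialRetraction_of_norm_le_one (mem_ball_zero_iff.1 hx).le)
  have hfderiv (x : E) (hx : x ∈ ball 0 1) :
      fderiv ℝ (h ∘ radialRetraction) x = fderiv ℝ h x :=
    (Filter.eventuallyEq_of_mem (isOpen_ball.mem_nhds hx) heq).fderiv_eq
  rw [← integral_det_one_add_fderiv_eq_measureReal μ isOpen_ball hK hLip (hdiff.congr heq)]
  · exact setIntegral_congr_fun measurableSet_ball fun x hx => by simp only [hfderiv x hx]
  · exact fun x hx => hzero _ <| mem_sphere_zero_iff_norm.2 <|
      norm_radialRetraction_of_one_le_norm (by simpa using hx)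

theorem integral_ball_det_fderiv_eq_of_eqOn_sphere {r : E → E} (hr : ContDiff ℝ 1 r)
    (hid : EqOn r id (sphere 0 1)) :
    ∫ x in ball (0 : E) 1, (fderiv ℝ r x).det ∂μ = μ.real (ball (0 : E) 1) := by
  let h : E → E := fun x => r x - x
  have hh : ContDiff ℝ 1 h := hr.sub contDiff_id
  have hhdiff : Differentiable ℝ h := hh.differentiable one_ne_zero
  obtain ⟨K, hK⟩ := (hh.contDiffOn (s := closedBall 0 1)).exists_lipschitzOnWith one_ne_zero
    (convex_closedBall _ _) (isCompact_closedBall _ _)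
  choose P hPdeg hP using fun x =>
    exists_polynomial_eval_eq_det_one_add_smul (fderiv ℝ h x : E →ₗ[ℝ] E)
  have hPdet (t : ℝ) (x : E) : (P x).eval t = (1 + t • fderiv ℝ h x).det := hP x t
  let S : Set ℝ := {t | ‖t‖₊ * K * 2 < 1}
  have hS : S.Infinite := infinite_of_mem_nhds 0 <|
    (isOpen_lt (by fun_prop) continuous_const).mem_nhds (by simp)
  have hint (t : ℝ) : IntegrableOn (fun x => (P x).eval t) (ball 0 1) μ := by
    have hcont : Continuous fun x => (1 + t • fderiv ℝ h x).det :=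
      ContinuousLinearMap.continuous_det.comp
        (by have := hh.continuous_fderiv one_ne_zero; fun_prop)
    simp_rw [hPdet]
    exact (hcont.continuousOn.integrableOn_compact (isCompact_closedBall 0 1)).mono_set
      ball_subset_closedBall
  have hconst (t : ℝ) (ht : t ∈ S) :
      ∫ x in ball (0 : E) 1, (P x).eval t ∂μ = μ.real (ball (0 : E) 1) := by
    rw [← integral_ball_det_one_add_fderiv_eq_measureReal μ ht
      ((lipschitzWith_smul t).comp_lipschitzOnWith hK)
      (hhdiff.const_smul t).differentiableOn fun x hx => by simp [h, hid hx]]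
    refine integral_congr_ae (.of_forall fun x => ?_)
    exact (hPdet t x).trans (by rw [← fderiv_const_smul (hhdiff x)]; rfl)
  have hr' (x : E) : (P x).eval 1 = (fderiv ℝ r x).det := by
    rw [hPdet, one_smul, fderiv_fun_sub (hr.differentiable one_ne_zero x) differentiableAt_fun_id,
      fderiv_fun_id, ContinuousLinearMap.one_def, add_sub_cancel]
  simpa only [hr'] using integral_eval_eq_of_infinite hPdeg hS (fun t _ => hint t) hconst 1

end ChangeOfVariables

theorem exists_norm_ne_one_of_eqOn_sphere {r : E → E} (hr : ContDiff ℝ 1 r)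
    (hid : EqOn r id (sphere 0 1)) : ∃ x, ‖r x‖ ≠ 1 := by
  by_contra! hnorm
  borelize E
  have hvol := integral_ball_det_fderiv_eq_of_eqOn_sphere Measure.addHaar hr hid
  simp only [det_fderiv_eq_zero_of_norm_eq_one hr hnorm, integral_zero] at hvol
  exact (ENNReal.toReal_pos (measure_ball_pos _ _ one_pos).ne' measure_ball_lt_top.ne).ne hvol

end NoRetraction

section Zeros

open Metric Set

theorem exists_eq_zero_of_eventuallyEq_id_of_innerProductSpace {E : Type*} [NormedAddCommGroup E]
    [InnerProductSpace ℝ E] [FiniteDimensional ℝ E] {F : E → E} (hF : Continuous F)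
    (hid : F =ᶠ[Filter.cocompact E] id) : ∃ x, F x = 0 := by
  by_contra! hne
  obtain ⟨R, hR⟩ : ∃ R : ℝ, ∀ x, R ≤ ‖x‖ → F x = x := by
    rw [← cobounded_eq_cocompact] at hid
    simpa using Filter.hasBasis_cobounded_norm.eventually_iff.1 hid
  let R' := max R 1
  have hR'pos : 0 < R' := by positivity
  obtain ⟨g, hg, hgF, hgR, -⟩ := hF.exists_contDiff_approx_and_eqOn 1 hF.norm
    (fun x => norm_pos_iff.2 (hne x)) (S := {x | 2 * R' ≤ ‖x‖}) (U := {x | R' < ‖x‖})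
    (isClosed_le continuous_const continuous_norm)
    ((isOpen_lt continuous_const continuous_norm).mem_nhdsSet.2 fun x (hx : 2 * R' ≤ ‖x‖) =>
      show R' < ‖x‖ by linarith)
    (contDiffOn_id.congr fun x (hx : R' < ‖x‖) => hR x ((le_max_left R 1).trans hx.le))
  have hg0 (x : E) : g x ≠ 0 := fun h0 => by simpa [h0] using hgF x
  have hscaled : ContDiff ℝ 1 fun x => g ((2 * R') • x) := hg.comp (contDiff_const_smul _)
  obtain ⟨x, hx⟩ := exists_norm_ne_one_of_eqOn_sphere
    (r := fun x => ‖g ((2 * R') • x)‖⁻¹ • g ((2 * R') • x))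
    (((hscaled.norm ℝ fun x => hg0 _).inv fun x => norm_ne_zero_iff.2 (hg0 _)).smul hscaled)
    fun x hx => by
      have hnorm : ‖(2 * R') • x‖ = 2 * R' := by
        rw [norm_smul, mem_sphere_zero_iff_norm.1 hx, mul_one, Real.norm_of_nonneg (by positivity)]
      have hgx : g ((2 * R') • x) = (2 * R') • x := by
        rw [hgR hnorm.ge, hR _ (by linarith [le_max_left R 1])]
      simp only [hgx, hnorm, id_eq]
      exact inv_smul_smul₀ (by positivity) x
  exact hx (norm_smul_inv_norm (𝕜 := ℝ) (hg0 _))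

variable {E : Type*} [NormedAddCommGroup E] [NormedSpace ℝ E]

theorem radialRetraction_smul_of_norm_eq_one {x : E} (hx : ‖x‖ = 1) {t : ℝ} (ht : 1 ≤ t) :
    radialRetraction (t • x) = x := by
  have hnorm : ‖t • x‖ = t := by rw [norm_smul, hx, mul_one, Real.norm_of_nonneg (by positivity)]
  rw [radialRetraction, hnorm, max_eq_right ht, inv_smul_smul₀ (by positivity)]

/-- A nowhere vanishing map may be deformed in a collar of the unit sphere to another map that is
nowhere opposite to it there. -/
theorem exists_continuous_ne_zero_eqOn_sphere {F Q : E → E} (hF : Continuous F)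
    (hQ : Continuous Q) (hF0 : ∀ x, F x ≠ 0)
    (hseg : ∀ x ∈ sphere (0 : E) 1, (0 : E) ∉ segment ℝ (F x) (Q x)) :
    ∃ G : E → E, Continuous G ∧ (∀ x, G x ≠ 0) ∧ EqOn G Q (sphere 0 1) := by
  let a : E → ℝ := fun x => max 0 (min 1 (2 * ‖x‖ - 1))
  let ρ : E → E := fun x => radialRetraction ((2 : ℝ) • x)
  refine ⟨fun x => AffineMap.lineMap (F (ρ x)) (Q (ρ x)) (a x), by fun_prop, fun x => ?_,
    fun x hx => ?_⟩
  · have hnorm : ‖(2 : ℝ) • x‖ = 2 * ‖x‖ := by simp [norm_smul]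
    rcases le_total (2 * ‖x‖) 1 with hx | hx
    · have ha : a x = 0 := max_eq_left ((min_le_right _ _).trans (by linarith))
      simpa [ha] using hF0 (ρ x)
    · have hρ : ρ x ∈ sphere (0 : E) 1 := mem_sphere_zero_iff_norm.2 <|
        norm_radialRetraction_of_one_le_norm (hx.trans hnorm.ge)
      intro h0
      refine hseg _ hρ ?_
      rw [segment_eq_image_lineMap, ← h0]
      exact mem_image_of_mem _ ⟨le_max_left _ _, max_le zero_le_one (min_le_left _ _)⟩
  · have hx1 := mem_sphere_zero_iff_norm.1 hx
    have ha : a x = 1 := by norm_num [a, hx1]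
    simp [ρ, ha, radialRetraction_smul_of_norm_eq_one hx1 one_le_two]

variable [FiniteDimensional ℝ E]

theorem exists_eq_zero_of_eventuallyEq_id {F : E → E} (hF : Continuous F)
    (hid : F =ᶠ[Filter.cocompact E] id) : ∃ x, F x = 0 := by
  let e : E ≃L[ℝ] _ := toEuclidean
  have hlim : Filter.Tendsto e.symm (Filter.cocompact _) (Filter.cocompact E) :=
    e.symm.toHomeomorph.isClosedEmbedding.tendsto_cocompact
  obtain ⟨x, hx⟩ := exists_eq_zero_of_eventuallyEq_id_of_innerProductSpace (F := e ∘ F ∘ e.symm)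
    (e.continuous.comp (hF.comp e.symm.continuous)) <| by
      filter_upwards [hlim.eventually hid] with x hx
      simp [hx]
  exact ⟨e.symm x, by simpa using hx⟩

theorem exists_eq_zero_of_eqOn_sphere {F : E → E} (hF : Continuous F)
    (hid : EqOn F id (sphere 0 1)) : ∃ x, F x = 0 := by
  obtain ⟨x, hx⟩ := exists_eq_zero_of_eventuallyEq_id
    (F := fun x => max 1 ‖x‖ • F (radialRetraction x)) (by fun_prop) <| by
      rw [← cobounded_eq_cocompact]
      filter_upwards [eventually_cobounded_le_norm (1 : ℝ)] with x hx
      rw [hid (mem_sphere_zero_iff_norm.2 (norm_radialRetraction_of_one_le_norm hx))]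
      exact max_one_norm_smul_radialRetraction x
  exact ⟨_, (smul_eq_zero_iff_right (by positivity)).1 hx⟩

theorem exists_eq_zero_of_zero_notMem_segment {F Q : E → E} (hF : Continuous F)
    (hQ : Continuous Q) (hFQ : ∀ x ∈ sphere (0 : E) 1, (0 : E) ∉ segment ℝ (F x) (Q x))
    (hQid : ∀ x ∈ sphere (0 : E) 1, (0 : E) ∉ segment ℝ (Q x) x) : ∃ x, F x = 0 := by
  by_contra! hF0
  obtain ⟨G, hG, hG0, hGQ⟩ := exists_continuous_ne_zero_eqOn_sphere hF hQ hF0 hFQ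
  obtain ⟨H, hH, hH0, hHid⟩ := exists_continuous_ne_zero_eqOn_sphere hG continuous_id hG0
    fun x hx => by rw [hGQ hx]; exact hQid x hx
  obtain ⟨x, hx⟩ := exists_eq_zero_of_eqOn_sphere hH hHid
  exact hH0 x hx

end Zeros

section Logarithm

open Set

theorem exists_continuous_exp_eq_eqOn_log {W : Type*} [TopologicalSpace W]
    [SimplyConnectedSpace W] [LocallyPathConnectedSpace W] {f : W → ℂ} (hf : Continuous f)
    (hf0 : ∀ x, f x ≠ 0) {S : Set W} (hS : IsConnected S) (hslit : MapsTo f S Complex.slitPlane) :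
    ∃ u : W → ℂ, Continuous u ∧ (∀ x, Complex.exp (u x) = f x) ∧
      EqOn u (Complex.log ∘ f) S := by
  obtain ⟨⟨x₀, hx₀⟩, hSpre⟩ := hS
  obtain ⟨u, ⟨hux₀, hu⟩, -⟩ := Complex.isCoveringMapOn_exp.existsUnique_continuousMap_lifts
    ⟨f, hf⟩ (a₀ := x₀) (Complex.exp_log (hf0 x₀)) hf0
  have hexp (x : W) : Complex.exp (u x) = f x := congrFun hu x
  have hinj : IsLocallyInjective Complex.exp := fun z => by
    obtain ⟨U, hU, hz, hinjOn⟩ := Complex.isCoveringMap_exp.isLocalHomeomorph.isLocallyInjective z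
    exact ⟨U, hU, hz, fun a ha b hb hab => hinjOn ha hb (Subtype.ext hab)⟩
  refine ⟨u, u.continuous, hexp, ?_⟩
  exact (T2Space.isSeparatedMap Complex.exp).eqOn_of_comp_eqOn hinj hSpre
    u.continuous.continuousOn (hf.continuousOn.clog hslit)
    (fun x _ => by simp [hexp, Complex.exp_log (hf0 x)]) hx₀ hux₀

/-- Exponentials with a common imaginary part lie on one open ray. -/
theorem exists_im_ne_im_of_sum_exp_eq_zero {C : Type*} [Fintype C] [Nonempty C] {u : C → ℂ}
    (hu : ∑ j, Complex.exp (u j) = 0) : ∃ i j, (u i).im ≠ (u j).im := by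
  by_contra! him
  obtain ⟨j₀⟩ := ‹Nonempty C›
  have hray (j : C) : Complex.exp (u j)
      = (Real.exp (u j).re : ℂ) * Complex.exp ((u j₀).im * Complex.I) := by
    rw [← him j j₀, Complex.ofReal_exp, ← Complex.exp_add, Complex.re_add_im]
  simp_rw [hray, ← Finset.sum_mul] at hu
  have hsum : ∑ j, Real.exp (u j).re = 0 := by
    exact_mod_cast (mul_eq_zero.1 hu).resolve_right (Complex.exp_ne_zero _)
  exact (Finset.sum_pos (fun j _ => Real.exp_pos _) ⟨j₀, Finset.mem_univ _⟩).ne' hsum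

end Logarithm

section SumZero

variable {C : Type*} [Fintype C]

variable (C) in
/-- The space of real vectors with vanishing coordinate sum. -/
def sumZero : Submodule ℝ (C → ℝ) := LinearMap.ker (∑ j, LinearMap.proj j)

theorem mem_sumZero {v : C → ℝ} : v ∈ sumZero C ↔ ∑ j, v j = 0 := by
  simp [sumZero]

/-- The projection onto `sumZero C` along the constant vectors, subtracting the mean. -/
def centering : (C → ℝ) →ₗ[ℝ] sumZero C :=
  LinearMap.codRestrict (sumZero C)
    (LinearMap.id - LinearMap.pi fun _ => (Fintype.card C : ℝ)⁻¹ • ∑ j, LinearMap.proj j)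
    fun θ => by
      rcases isEmpty_or_nonempty C
      · simp [mem_sumZero]
      · simp [mem_sumZero]

theorem centering_apply_sub (θ : C → ℝ) (i j : C) :
    (centering θ : C → ℝ) i - (centering θ : C → ℝ) j = θ i - θ j := by
  simp [centering]

theorem exists_pos_exists_neg_of_mem_sumZero {v : C → ℝ} (hv : v ∈ sumZero C) (hv0 : v ≠ 0) :
    (∃ i, 0 < v i) ∧ ∃ i, v i < 0 := by
  have hpos {w : C → ℝ} (hw : w ∈ sumZero C) (hw0 : w ≠ 0) : ∃ i, 0 < w i := by
    obtain ⟨j, hj⟩ := Function.ne_iff.1 hw0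
    obtain ⟨i, -, hi⟩ := Finset.exists_pos_of_sum_zero_of_exists_nonzero w (mem_sumZero.1 hw)
      ⟨j, Finset.mem_univ j, hj⟩
    exact ⟨i, hi⟩
  obtain ⟨i, hi⟩ := hpos (neg_mem hv) (neg_ne_zero.2 hv0)
  exact ⟨hpos hv hv0, i, neg_pos.1 hi⟩

end SumZero

section Obstruction

open Metric Set

theorem zero_notMem_segment_of_pos {E : Type*} [AddCommGroup E] [Module ℝ E] (φ : E →ₗ[ℝ] ℝ)
    {x y : E} (hx : 0 < φ x) (hy : 0 < φ y) : (0 : E) ∉ segment ℝ x y := fun h0 => by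
  have hpos : (0 : E) ∈ {z | 0 < φ z} :=
    (convex_halfSpace_gt φ.isLinear 0).segment_subset hx hy h0
  simp at hpos

variable {W : Type*} [NormedAddCommGroup W] [NormedSpace ℝ W] [FiniteDimensional ℝ W]
  {C : Type*} [Fintype C]

theorem exists_forall_eq_of_sphere (e : W ≃ₗ[ℝ] sumZero C) {Q : W → W} (hQ : Continuous Q)
    (hQid : ∀ x ∈ sphere (0 : W) 1, (0 : W) ∉ segment ℝ (Q x) x)
    {θ : W → C → ℝ} (hθ : Continuous θ)
    (hneg : ∀ x ∈ sphere (0 : W) 1, ∀ j, 0 < (e (Q x) : C → ℝ) j → θ x j < 0)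
    (hnonneg : ∀ x ∈ sphere (0 : W) 1, ∀ j, (e (Q x) : C → ℝ) j < 0 → 0 ≤ θ x j) :
    ∃ x, ∀ i j, θ x i = θ x j := by
  let Θ : W → W := fun x => -e.symm (centering (θ x))
  have hΘ : Continuous Θ :=
    ((e.symm.toLinearMap ∘ₗ centering).continuous_of_finiteDimensional.comp hθ).neg
  have hΘsub (x : W) (i j : C) :
      (e (Θ x) : C → ℝ) i - (e (Θ x) : C → ℝ) j = θ x j - θ x i := by
    have := centering_apply_sub (θ x) i j
    simp only [Θ, map_neg, LinearEquiv.apply_symm_apply, Submodule.coe_neg, Pi.neg_apply]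
    linarith
  have hΘQ (x : W) (hx : x ∈ sphere (0 : W) 1) : (0 : W) ∉ segment ℝ (Θ x) (Q x) := by
    have hQ0 : (e (Q x) : C → ℝ) ≠ 0 := fun h0 => hQid x hx <| by
      have : Q x = 0 := by simpa using h0
      rw [this]
      exact left_mem_segment ..
    obtain ⟨⟨i, hi⟩, i', hi'⟩ := exists_pos_exists_neg_of_mem_sumZero (e (Q x)).2 hQ0
    let φ : (C → ℝ) →ₗ[ℝ] ℝ :=
      (LinearMap.proj i : (C → ℝ) →ₗ[ℝ] ℝ) - LinearMap.proj i'
    refine zero_notMem_segment_of_pos (φ ∘ₗ (sumZero C).subtype ∘ₗ e.toLinearMap) ?_ ?_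
    · simpa [φ, hΘsub] using (hneg x hx i hi).trans_le (hnonneg x hx i' hi')
    · simpa [φ] using hi'.trans hi
  obtain ⟨x, hx⟩ := exists_eq_zero_of_zero_notMem_segment hΘ hQ hΘQ hQid
  exact ⟨x, fun i j => by simpa [hx, sub_eq_zero, eq_comm] using hΘsub x i j⟩

theorem exists_sum_ne_zero_of_sphere (hW : 1 < Module.finrank ℝ W) (e : W ≃ₗ[ℝ] sumZero C)
    {Q : W → W} (hQ : Continuous Q) (hQid : ∀ x ∈ sphere (0 : W) 1, (0 : W) ∉ segment ℝ (Q x) x)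
    {ζ : W → C → ℂ} (hζ : Continuous ζ) (hζ0 : ∀ x j, ζ x j ≠ 0)
    (hre : ∀ x ∈ sphere (0 : W) 1, ∀ j, (ζ x j).re = (e (Q x) : C → ℝ) j)
    (him : ∀ x ∈ sphere (0 : W) 1, ∀ j, (ζ x j).re = 0 → 0 < (ζ x j).im) :
    ∃ x, ∑ j, ζ x j ≠ 0 := by
  have hC : Nonempty C := by
    by_contra hempty
    have := not_nonempty_iff.1 hempty
    rw [e.finrank_eq, Module.finrank_zero_of_subsingleton] at hW
    lia
  have hsphere : IsConnected (sphere (0 : W) 1) :=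
    isConnected_sphere (by rw [← Module.finrank_eq_rank]; exact_mod_cast hW) 0 zero_le_one
  have hslit (j : C) : MapsTo (fun x => -Complex.I * ζ x j) (sphere 0 1) Complex.slitPlane := by
    intro x hx
    rw [Complex.mem_slitPlane_iff]
    by_cases h0 : (ζ x j).re = 0
    · exact Or.inl (by simpa using him x hx j h0)
    · exact Or.inr (by simpa using h0)
  choose u hu hexp hlog using fun j => exists_continuous_exp_eq_eqOn_log
    (f := fun x => -Complex.I * ζ x j) (by fun_prop) (fun x => by simp [hζ0]) hsphere (hslit j)
  have harg (x : W) (hx : x ∈ sphere 0 1) (j : C) : (u j x).im = (-Complex.I * ζ x j).arg := by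
    rw [hlog j hx, Function.comp_apply, Complex.log_im]
  obtain ⟨x, hx⟩ := exists_forall_eq_of_sphere e hQ hQid
    (continuous_pi fun j => Complex.continuous_im.comp (hu j))
    (fun x hx j hj => by
      rw [Function.comp_apply, harg x hx, Complex.arg_neg_iff]; simpa [hre x hx] using hj)
    (fun x hx j hj => by
      rw [Function.comp_apply, harg x hx, Complex.arg_nonneg_iff]
      simpa [hre x hx] using hj.le)
  refine ⟨x, fun hsum => ?_⟩
  obtain ⟨i, j, hij⟩ := exists_im_ne_im_of_sum_exp_eq_zero (u := fun j => u j x) <| by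
    simp_rw [hexp, ← Finset.mul_sum, hsum, mul_zero]
  exact hij (hx i j)

end Obstruction

section Collapse

open Metric

variable {E : Type*} [NormedAddCommGroup E]

/-- The unit sphere of `ℝ × E` is the boundary of the cylinder `[-1, 1] × closedBall 0 1`;
`bottomDist` vanishes at the centre `(-1, 0)` of its bottom face and is `1` on its other faces. -/
def bottomDist (x : ℝ × E) : ℝ := max ‖x.2‖ ((x.1 + 1) / 2)

@[fun_prop]
theorem continuous_bottomDist : Continuous (bottomDist : ℝ × E → ℝ) := by
  unfold bottomDist
  fun_prop

theorem norm_snd_le_bottomDist (x : ℝ × E) : ‖x.2‖ ≤ bottomDist x := le_max_left _ _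

theorem one_le_bottomDist_of_mem_sphere {x : ℝ × E} (hx : x ∈ sphere 0 1) (hbot : x.1 ≠ -1) :
    1 ≤ bottomDist x := by
  rw [mem_sphere_zero_iff_norm, Prod.norm_def] at hx
  rcases le_total ‖x.2‖ ‖x.1‖ with h | h
  · rw [max_eq_left h, Real.norm_eq_abs] at hx
    have htop : x.1 = 1 := ((abs_eq zero_le_one).1 hx).resolve_right hbot
    exact le_max_of_le_right (by linarith)
  · rw [max_eq_right h] at hx
    exact hx.ge.trans (norm_snd_le_bottomDist x)

/-- The coefficient used in `collapse`, decreasing from `1` at `(-1, 0)` to `0` at `bottomDist`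
`1 / 2`. -/
def collapseWeight (x : ℝ × E) : ℝ := max (1 - 2 * bottomDist x) 0

theorem collapseWeight_nonneg (x : ℝ × E) : 0 ≤ collapseWeight x := le_max_right _ _

theorem collapseWeight_le_one (x : ℝ × E) : collapseWeight x ≤ 1 :=
  max_le (by linarith [norm_nonneg x.2, norm_snd_le_bottomDist x]) zero_le_one

theorem collapseWeight_eq_zero {x : ℝ × E} (hx : 1 / 2 ≤ bottomDist x) : collapseWeight x = 0 :=
  max_eq_right (by linarith)

@[fun_prop]
theorem continuous_collapseWeight : Continuous (collapseWeight : ℝ × E → ℝ) := by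
  unfold collapseWeight
  fun_prop

variable [NormedSpace ℝ E]

/-- The self-map of the cylinder `[-1, 1] × closedBall 0 1`, whose boundary is the unit sphere of
`ℝ × E`, that on this boundary is homotopic to the identity away from `0` but sends every face
except the bottom one `{-1} × closedBall 0 1` to the single point `(1, 0)`. -/
def collapse (x : ℝ × E) : ℝ × E := (1 - 2 * collapseWeight x, collapseWeight x • x.2)

@[fun_prop]
theorem continuous_collapse : Continuous (collapse : ℝ × E → ℝ × E) := by
  unfold collapse
  fun_prop

theorem collapse_of_half_le_bottomDist {x : ℝ × E} (hx : 1 / 2 ≤ bottomDist x) :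
    collapse x = (1, 0) := by
  simp [collapse, collapseWeight_eq_zero hx]

theorem norm_collapse_le_one (x : ℝ × E) : ‖collapse x‖ ≤ 1 := by
  have hnonneg := collapseWeight_nonneg x
  have hle := collapseWeight_le_one x
  rcases le_total (1 / 2) (bottomDist x) with h | h
  · simp [collapse_of_half_le_bottomDist h]
  · rw [collapse, Prod.norm_mk]
    refine max_le (abs_le.2 ⟨by linarith, by linarith⟩) ?_
    rw [norm_smul, Real.norm_of_nonneg hnonneg]
    exact mul_le_one₀ hle (norm_nonneg _) (by linarith [norm_snd_le_bottomDist x])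

theorem zero_notMem_segment_collapse {x : ℝ × E} (hx : x ∈ sphere 0 1) :
    (0 : ℝ × E) ∉ segment ℝ (collapse x) x := by
  rintro ⟨a, b, ha, hb, hab, h0⟩
  have h1 : a * (1 - 2 * collapseWeight x) + b * x.1 = 0 := congrArg Prod.fst h0
  have h2 : (a * collapseWeight x + b) • x.2 = 0 := by
    simpa [collapse, add_smul, mul_smul] using congrArg Prod.snd h0
  have hw := collapseWeight_nonneg x
  rcases smul_eq_zero.1 h2 with hzero | hx2
  · have haw := mul_nonneg ha hw
    obtain rfl : b = 0 := by linarith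
    obtain rfl : a = 1 := by linarith
    linarith
  · have hnorm : |x.1| = 1 := by simpa [Prod.norm_def, hx2] using hx
    rcases (abs_eq zero_le_one).1 hnorm with htop | hbot
    · norm_num [collapseWeight, bottomDist, htop, hx2] at h1
      linarith
    · norm_num [collapseWeight, bottomDist, hbot, hx2] at h1
      linarith

theorem collapse_ne_zero_of_mem_sphere {x : ℝ × E} (hx : x ∈ sphere 0 1) : collapse x ≠ 0 :=
  fun h0 => zero_notMem_segment_collapse hx (h0 ▸ left_mem_segment ℝ (collapse x) x)

end Collapse

section PositiveCircuits

open Set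

variable {V : Type*} [AddCommGroup V] [Module ℝ V]

theorem exists_nonneg_relation_of_infeasible {ι : Type*} [Fintype ι] {γ : ι → V →ₗ[ℝ] ℝ}
    (hγ : ¬ ∃ x, ∀ j, 0 < γ j x) :
    ∃ lam : ι → ℝ, 0 ≤ lam ∧ lam ≠ 0 ∧ ∑ j, lam j • γ j = 0 := by
  classical
  let orthant : Set (ι → ℝ) := univ.pi fun _ => Ioi 0
  let R : Submodule ℝ (ι → ℝ) := LinearMap.range (LinearMap.pi γ)
  have hdisj : Disjoint orthant R := disjoint_left.2 <| by
    rintro _ hx ⟨x, rfl⟩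
    exact hγ ⟨x, fun j => hx j trivial⟩
  obtain ⟨f, u, hfu, huf⟩ := geometric_hahn_banach_open (convex_pi fun _ _ => convex_Ioi 0)
    (isOpen_set_pi finite_univ fun _ _ => isOpen_Ioi) R.convex hdisj
  have hu : u ≤ 0 := by simpa using huf 0 R.zero_mem
  have hfR (x : V) : f (LinearMap.pi γ x) = 0 := by
    by_contra hne
    have h := huf _ (R.smul_mem ((u - 1) / f (LinearMap.pi γ x)) ⟨x, rfl⟩)
    rw [map_smul, smul_eq_mul, div_mul_cancel₀ _ hne] at h
    linarith
  have hclosure : (univ.pi fun _ => Ici 0) ⊆ f ⁻¹' Iic 0 := by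
    simp_rw [← closure_Ioi, ← closure_pi_set]
    exact closure_minimal (fun y hy => ((hfu y hy).trans_le hu).le)
      (isClosed_Iic.preimage f.continuous)
  have hfsum (y : ι → ℝ) : f y = ∑ j, y j * f (Pi.single j 1) := by
    conv_lhs => rw [pi_eq_sum_univ' y]
    simp
  refine ⟨fun j => -f (Pi.single j 1), fun j => ?_, fun h0 => ?_, ?_⟩
  · have hsingle : (0 : ι → ℝ) ≤ Pi.single j 1 := Pi.single_nonneg.2 zero_le_one
    simpa using hclosure fun i _ => hsingle i
  · have h1 : f 1 < 0 := (hfu 1 fun j _ => zero_lt_one' ℝ).trans_le hu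
    rw [hfsum] at h1
    simp [fun j => neg_eq_zero.1 (congrFun h0 j)] at h1
  · ext x
    have hx := hfR x
    rw [hfsum] at hx
    simpa [mul_comm] using hx

/-- The linear forms `γ j` form a positive circuit with coefficients `lam`: up to scaling, the
positive combination with coefficients `lam` is the only linear relation between them. -/
structure IsPositiveCircuit {C : Type*} [Fintype C] (γ : C → V →ₗ[ℝ] ℝ) (lam : C → ℝ) : Prop where
  pos : ∀ j, 0 < lam j
  sum_smul_eq_zero : ∑ j, lam j • γ j = 0
  exists_eq_smul : ∀ μ : C → ℝ, ∑ j, μ j • γ j = 0 → ∃ t : ℝ, μ = t • lam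

section MinimalInfeasible

variable {C : Type*} [Fintype C] {γ : C → V →ₗ[ℝ] ℝ}

theorem eq_zero_of_nonneg_relation (hfeas : ∀ i, ∃ x, ∀ j ≠ i, 0 < γ j x) {μ : C → ℝ}
    (hμ : 0 ≤ μ) (hsum : ∑ j, μ j • γ j = 0) {i : C} (hi : μ i = 0) : μ = 0 := by
  obtain ⟨x, hx⟩ := hfeas i
  have hnonneg (j : C) : 0 ≤ μ j * γ j x := by
    by_cases hj : j = i
    · simp [hj, hi]
    · exact mul_nonneg (hμ j) (hx j hj).le
  have hsumx : ∑ j, μ j * γ j x = 0 := by simpa using LinearMap.congr_fun hsum x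
  ext j
  by_cases hj : j = i
  · exact hj ▸ hi
  · exact (mul_eq_zero.1 ((Finset.sum_eq_zero_iff_of_nonneg fun j _ => hnonneg j).1 hsumx j
      (Finset.mem_univ j))).resolve_right (hx j hj).ne'

theorem exists_isPositiveCircuit_of_minimal_infeasible (hinfeas : ¬ ∃ x, ∀ j, 0 < γ j x)
    (hfeas : ∀ i, ∃ x, ∀ j ≠ i, 0 < γ j x) : ∃ lam, IsPositiveCircuit γ lam := by
  obtain ⟨lam, hnonneg, hne, hsum⟩ := exists_nonneg_relation_of_infeasible hinfeas
  have hpos (j : C) : 0 < lam j :=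
    (hnonneg j).lt_of_ne' fun hj => hne (eq_zero_of_nonneg_relation hfeas hnonneg hsum hj)
  refine ⟨lam, hpos, hsum, fun μ hμ => ?_⟩
  obtain ⟨i₀, -⟩ := Function.ne_iff.1 hne
  have : Nonempty C := ⟨i₀⟩
  obtain ⟨i, hi⟩ := Finite.exists_min fun j => μ j / lam j
  refine ⟨μ i / lam i, sub_eq_zero.1 (eq_zero_of_nonneg_relation hfeas (i := i) ?_ ?_ ?_)⟩
  · intro j
    simpa using (le_div_iff₀ (hpos j)).1 (hi j)
  · ext x
    have hμx := LinearMap.congr_fun hμ x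
    have hsumx := LinearMap.congr_fun hsum x
    simp only [LinearMap.sum_apply, LinearMap.smul_apply, smul_eq_mul, Pi.sub_apply, Pi.smul_apply,
      LinearMap.zero_apply, sub_mul, mul_assoc, Finset.sum_sub_distrib, ← Finset.mul_sum]
      at hμx hsumx ⊢
    rw [hμx, hsumx, mul_zero, sub_zero]
  · simp [(hpos i).ne']

end MinimalInfeasible

theorem exists_subset_isPositiveCircuit {ι : Type*} {γ : ι → V →ₗ[ℝ] ℝ} {J : Finset ι}
    (hJ : ¬ ∃ x, ∀ j ∈ J, 0 < γ j x) :
    ∃ C ⊆ J, (¬ ∃ x, ∀ j ∈ C, 0 < γ j x) ∧ ∃ lam, IsPositiveCircuit (fun j : C => γ j) lam := by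
  classical
  obtain ⟨C, hCJ, hC⟩ := exists_minimal_le_of_wellFoundedLT
    (fun C : Finset ι => ¬ ∃ x, ∀ j ∈ C, 0 < γ j x) J hJ
  refine ⟨C, hCJ, hC.prop, exists_isPositiveCircuit_of_minimal_infeasible ?_ fun i => ?_⟩
  · simpa using hC.prop
  · obtain ⟨x, hx⟩ := not_not.1 (hC.not_prop_of_lt (Finset.erase_ssubset i.2))
    exact ⟨x, fun j hj => hx j (Finset.mem_erase.2 ⟨fun h => hj (Subtype.ext h), j.2⟩)⟩

namespace IsPositiveCircuit
variable {C : Type*} [Fintype C] {γ : C → V →ₗ[ℝ] ℝ} {lam : C → ℝ}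

theorem ker_pi (hγ : IsPositiveCircuit γ lam) :
    LinearMap.ker (LinearMap.pi fun j => lam j • γ j) = ⨅ j, LinearMap.ker (γ j) := by
  simp_rw [LinearMap.ker_pi, LinearMap.ker_smul _ _ (hγ.pos _).ne']

theorem range_pi (hγ : IsPositiveCircuit γ lam) :
    LinearMap.range (LinearMap.pi fun j => lam j • γ j) = sumZero C := by
  classical
  refine le_antisymm ?_ fun θ hθ => ?_
  · rintro _ ⟨x, rfl⟩
    simpa [mem_sumZero] using LinearMap.congr_fun hγ.sum_smul_eq_zero x
  · by_contra hnotMem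
    obtain ⟨f, hfθ, hf⟩ := Submodule.exists_le_ker_of_notMem hnotMem
    have hfsum (y : C → ℝ) : f y = ∑ j, y j * f (Pi.single j 1) := by
      conv_lhs => rw [pi_eq_sum_univ' y]
      simp
    obtain ⟨t, ht⟩ := hγ.exists_eq_smul (fun j => f (Pi.single j 1) * lam j) <| by
      ext x
      have hx := LinearMap.mem_ker.1 (hf ⟨x, rfl⟩)
      rw [hfsum] at hx
      simpa [mul_comm, mul_left_comm, mul_assoc] using hx
    have hconst (j : C) : f (Pi.single j 1) = t :=
      mul_right_cancel₀ (hγ.pos j).ne' (congrFun ht j)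
    refine hfθ ?_
    rw [hfsum]
    simp_rw [hconst, ← Finset.sum_mul, mem_sumZero.1 hθ, zero_mul]

end IsPositiveCircuit

theorem exists_bijective_comp_apply_eq {W U : Type*} [NormedAddCommGroup W] [NormedSpace ℝ W]
    [FiniteDimensional ℝ W] [AddCommGroup U] [Module ℝ U] [FiniteDimensional ℝ U]
    {β : V →ₗ[ℝ] U} (hβ : Function.Surjective β)
    (hdim : Module.finrank ℝ W = Module.finrank ℝ U) {w₀ : W} (hw₀ : w₀ ≠ 0) {a : V}
    (ha : β a ≠ 0) : ∃ s : W →ₗ[ℝ] V, s w₀ = a ∧ Function.Bijective (β ∘ₗ s) := by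
  let e : W ≃ₗ[ℝ] U := LinearEquiv.ofFinrankEq W U hdim
  obtain ⟨A, hA⟩ := SeparatingDual.exists_continuousLinearEquiv_apply_eq (R := ℝ)
    hw₀ (e.symm.map_ne_zero_iff.2 ha)
  obtain ⟨g, hg⟩ := β.exists_rightInverse_of_surjective (LinearMap.range_eq_top.2 hβ)
  obtain ⟨φ, hφ⟩ := SeparatingDual.exists_eq_one (R := ℝ) hw₀
  have hβg (u : U) : β (g u) = u := LinearMap.congr_fun hg u
  let s : W →ₗ[ℝ] V :=
    g ∘ₗ e.toLinearMap ∘ₗ A.toLinearMap + φ.toLinearMap.smulRight (a - g (β a))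
  have hs : β ∘ₗ s = e.toLinearMap ∘ₗ A.toLinearMap := by
    ext w
    simp [s, hβg]
  refine ⟨s, by simp [s, hA, hφ], ?_⟩
  rw [hs]
  exact e.bijective.comp A.bijective

theorem IsPositiveCircuit.exists_section {C : Type*} [Fintype C] {γ : C → V →ₗ[ℝ] ℝ} {lam : C → ℝ}
    (hγ : IsPositiveCircuit γ lam) [FiniteDimensional ℝ V] {W : Type*} [NormedAddCommGroup W]
    [NormedSpace ℝ W] [FiniteDimensional ℝ W]
    (hdim : Module.finrank ℝ W + Module.finrank ℝ (⨅ j, LinearMap.ker (γ j) : Submodule ℝ V)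
      = Module.finrank ℝ V)
    {w₀ : W} (hw₀ : w₀ ≠ 0) {a : V} (ha : a ∉ ⨅ j, LinearMap.ker (γ j)) :
    ∃ (s : W →ₗ[ℝ] V) (e : W ≃ₗ[ℝ] sumZero C), s w₀ = a ∧
      ∀ w j, (e w : C → ℝ) j = lam j * γ j (s w) := by
  let β : V →ₗ[ℝ] C → ℝ := LinearMap.pi fun j => lam j • γ j
  have hrank := LinearMap.finrank_range_add_finrank_ker β
  rw [hγ.ker_pi, ← hdim, Nat.add_right_cancel_iff, hγ.range_pi] at hrank
  let β' : V →ₗ[ℝ] sumZero C := β.codRestrict _ fun x => hγ.range_pi ▸ LinearMap.mem_range_self β x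
  have hβ' : Function.Surjective β' := by
    rintro ⟨θ, hθ⟩
    obtain ⟨x, rfl⟩ := hγ.range_pi.symm ▸ hθ
    exact ⟨x, rfl⟩
  obtain ⟨s, hs, hbij⟩ := exists_bijective_comp_apply_eq hβ' hrank.symm hw₀ (a := a) fun h0 =>
    ha (hγ.ker_pi ▸ congrArg Subtype.val h0)
  exact ⟨s, LinearEquiv.ofBijective _ hbij, hs, fun w j => rfl⟩

end PositiveCircuits

section Gap

variable {ℓ n k : ℕ} {α : Fin n → (Vsp ℓ →ₗ[ℝ] ℝ)} {ε : Fin n → ℝ} {I : Finset (Fin n)}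

theorem mem_interKer {x : Vsp ℓ} : x ∈ interKer α I ↔ ∀ i ∈ I, α i x = 0 := by
  simp [interKer]

theorem exists_not_consistentAt_of_gap (hmem : ε ∈ SigmaFilt ℓ α k)
    (hnotmem : ε ∉ SigmaFilt ℓ α (k + 1)) :
    ∃ I, ¬ ConsistentAt α ε I ∧ k + 1 + Module.finrank ℝ (interKer α I) = ℓ ∧
      ∀ I', interKer α I < interKer α I' → ConsistentAt α ε I' := by
  obtain ⟨hsign, hcons⟩ := hmem
  obtain ⟨I, hcodim, hI⟩ : ∃ I : Finset (Fin n),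
      ℓ - Module.finrank ℝ (interKer α I) ≤ k + 1 ∧ ¬ ConsistentAt α ε I := by
    by_contra! h
    exact hnotmem ⟨hsign, h⟩
  have hcodim' : k < ℓ - Module.finrank ℝ (interKer α I) := not_le.1 fun h => hI (hcons I h)
  refine ⟨I, hI, by omega, fun I' hlt => hcons I' ?_⟩
  have := Submodule.finrank_lt_finrank_of_lt hlt
  omega

theorem exists_forall_pos_of_notMem_interKer
    (hcons : ∀ I', interKer α I < interKer α I' → ConsistentAt α ε I') {x : Vsp ℓ}
    (hx : x ∉ interKer α I) :
    ∃ v, ∀ j, interKer α I ≤ LinearMap.ker (α j) → α j x = 0 → 0 < ε j * α j v := by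
  classical
  let I' : Finset (Fin n) := {j | interKer α I ≤ LinearMap.ker (α j) ∧ α j x = 0}
  have hI' {j : Fin n} : j ∈ I' ↔ interKer α I ≤ LinearMap.ker (α j) ∧ α j x = 0 := by simp [I']
  have hlt : interKer α I < interKer α I' := SetLike.lt_iff_le_and_exists.2
    ⟨fun y hy => mem_interKer.2 fun j hj => (hI'.1 hj).1 hy,
      x, mem_interKer.2 fun j hj => (hI'.1 hj).2, hx⟩
  obtain ⟨v, hv⟩ := hcons I' hlt
  exact ⟨v, fun j hj hjx => hv j fun y hy => mem_interKer.1 hy j (hI'.2 ⟨hj, hjx⟩)⟩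

theorem exists_isPositiveCircuit_of_not_consistentAt (hI : ¬ ConsistentAt α ε I)
    (hcons : ∀ I', interKer α I < interKer α I' → ConsistentAt α ε I') :
    ∃ C : Finset (Fin n), interKer α C = interKer α I ∧
      ∃ lam, IsPositiveCircuit (fun j : C => ε j • α j) lam := by
  classical
  obtain ⟨C, hCI, hC, hcircuit⟩ := exists_subset_isPositiveCircuit (γ := fun j => ε j • α j)
    (J := {j | interKer α I ≤ LinearMap.ker (α j)}) fun ⟨x, hx⟩ =>
      hI ⟨x, fun j hj => hx j (by simpa using hj)⟩
  have hle : interKer α I ≤ interKer α C := fun x hx =>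
    mem_interKer.2 fun j hj => (Finset.mem_filter.1 (hCI hj)).2 hx
  refine ⟨C, (hle.eq_of_not_lt fun hlt => hC ?_).symm, hcircuit⟩
  obtain ⟨x, hx⟩ := hcons C hlt
  exact ⟨x, fun j hj => hx j fun y hy => mem_interKer.1 hy j hj⟩

end Gap

section SphericalFamily

open Metric Set

variable {V : Type*} [NormedAddCommGroup V] [NormedSpace ℝ V] {ι : Type*} [Finite ι]

theorem exists_continuousMap_forall_pos {Y : Type*} [TopologicalSpace Y] [NormalSpace Y]
    [ParacompactSpace Y] {g : ι → Y → ℝ} (hg : ∀ i, Continuous (g i)) (φ : ι → V →ₗ[ℝ] ℝ)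
    {D : Set Y} (hD : IsClosed D) (hgD : ∀ y ∈ D, ∀ i, g i y ≠ 0)
    (hφ : ∀ y ∉ D, ∃ v, ∀ i, g i y = 0 → 0 < φ i v) (b : V) :
    ∃ v : C(Y, V), (∀ y i, g i y = 0 → 0 < φ i (v y)) ∧ ∀ y ∈ D, v y = b := by
  let T (y : Y) : Set V := {v | (∀ i, g i y = 0 → 0 < φ i v) ∧ (y ∈ D → v = b)}
  have hT (y : Y) : Convex ℝ (T y) := by
    have hTeq : T y = (⋂ (i) (_ : g i y = 0), {v | 0 < φ i v}) ∩ ⋂ _ : y ∈ D, {b} := by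
      ext v
      simp [T]
    rw [hTeq]
    exact (convex_iInter₂ fun i _ => convex_halfSpace_gt (φ i).isLinear 0).inter
      (convex_iInter fun _ => convex_singleton b)
  have hne (y : Y) : (T y).Nonempty := by
    by_cases hy : y ∈ D
    · exact ⟨b, fun i hi => absurd hi (hgD y hy i), fun _ => rfl⟩
    · exact (hφ y hy).imp fun v hv => ⟨hv, fun h => absurd h hy⟩
  have hconst (y : Y) : ∃ v, ∀ᶠ z in nhds y, v ∈ T z := by
    obtain ⟨v, hv⟩ := hne y
    have hzero (i : ι) : ∀ᶠ z in nhds y, g i z = 0 → 0 < φ i v := by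
      by_cases hi : g i y = 0
      · exact .of_forall fun _ _ => hv.1 i hi
      · filter_upwards [(hg i).continuousAt.eventually_ne hi] with z hz h using absurd h hz
    have hmem : ∀ᶠ z in nhds y, z ∈ D → v = b := by
      by_cases hy : y ∈ D
      · exact .of_forall fun _ _ => hv.2 hy
      · filter_upwards [hD.isOpen_compl.mem_nhds hy] with z hz h using absurd h hz
    exact ⟨v, (Filter.eventually_all.2 hzero).and hmem⟩
  obtain ⟨v, hv⟩ := exists_continuous_forall_mem_convex_of_local_const hT hconst
  exact ⟨v, fun y => (hv y).1, fun y => (hv y).2⟩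

variable [FiniteDimensional ℝ V] {α : ι → V →ₗ[ℝ] ℝ} {X : Submodule ℝ V}

theorem exists_mem_forall_apply_add_ne_zero {B : Set V} (hB : Bornology.IsBounded B) :
    ∃ q ∈ X, ∀ i, ¬ X ≤ LinearMap.ker (α i) → ∀ x ∈ B, α i (x + q) ≠ 0 := by
  obtain ⟨q, hqX, hq⟩ := Module.Dual.exists_forall_mem_ne_zero_of_forall_exists (K := ℝ) X
    (fun i : {i // ¬ X ≤ LinearMap.ker (α i)} => α i) fun i => SetLike.not_le_iff_exists.1 i.2
  have hbound (i : ι) : ∃ K, ∀ x ∈ B, |α i x| ≤ K :=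
    let ⟨K, hK⟩ := ((α i).toContinuousLinearMap.lipschitz.isBounded_image hB).exists_norm_le
    ⟨K, fun x hx => hK _ ⟨x, hx, rfl⟩⟩
  choose K hK using hbound
  obtain ⟨N, hN⟩ := (finite_range fun i => K i / |α i q|).bddAbove
  refine ⟨(|N| + 1) • q, X.smul_mem _ hqX, fun i hi x hx h0 => ?_⟩
  have hqi : 0 < |α i q| := abs_pos.2 (hq ⟨i, hi⟩)
  have hKN : K i ≤ N * |α i q| := (div_le_iff₀ hqi).1 (hN ⟨i, rfl⟩)
  have hαx : |α i x| = (|N| + 1) * |α i q| := by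
    rw [map_add, map_smul, smul_eq_mul] at h0
    rw [eq_neg_of_add_eq_zero_left h0, abs_neg, abs_mul, abs_of_pos (by positivity)]
  nlinarith [hK i x hx, le_abs_self N]

variable {E : Type*} [NormedAddCommGroup E] [NormedSpace ℝ E] [FiniteDimensional ℝ E]

theorem exists_continuousMap_sub_collapse_mem (α : ι → V →ₗ[ℝ] ℝ) (X : Submodule ℝ V)
    (s : ℝ × E →ₗ[ℝ] V) :
    ∃ x : C(ℝ × E, V), (∀ w, x w - s (collapse w) ∈ X) ∧
      (∀ w, bottomDist w ≤ 1 / 2 → ∀ i, ¬ X ≤ LinearMap.ker (α i) → α i (x w) ≠ 0) ∧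
      ∀ w, 1 ≤ bottomDist w → x w = s (1, 0) := by
  have hs : Continuous s := s.continuous_of_finiteDimensional
  have hB : Bornology.IsBounded (s '' closedBall 0 1) :=
    ((isCompact_closedBall 0 1).image hs).isBounded
  obtain ⟨q, hqX, hq⟩ := exists_mem_forall_apply_add_ne_zero (α := α) (X := X) hB
  let cutoff (w : ℝ × E) : ℝ := min (max (2 - 2 * bottomDist w) 0) 1
  refine ⟨⟨fun w => s (collapse w) + cutoff w • q, by fun_prop⟩, fun w => ?_, fun w hw i hi => ?_,
    fun w hw => ?_⟩
  · simpa using X.smul_mem _ hqX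
  · have hcutoff : cutoff w = 1 := min_eq_right (le_max_of_le_left (by linarith))
    simpa [hcutoff] using
      hq i hi _ ⟨collapse w, mem_closedBall_zero_iff.2 (norm_collapse_le_one w), rfl⟩
  · have hcutoff : cutoff w = 0 := by
      simp only [cutoff]
      rw [max_eq_right (by linarith), min_eq_left zero_le_one]
    simp [hcutoff, collapse_of_half_le_bottomDist (show 1 / 2 ≤ bottomDist w by linarith)]

theorem exists_spherical_family {s : ℝ × E →ₗ[ℝ] V} {ε : ι → ℝ} (hs : ∀ i, α i (s (1, 0)) ≠ 0)
    (hcons : ∀ w ≠ 0, ∃ v, ∀ j, X ≤ LinearMap.ker (α j) → α j (s w) = 0 → 0 < ε j * α j v)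
    (b : V) :
    ∃ x v : C(sphere (0 : ℝ × E) 1, V),
      (∀ y j, X ≤ LinearMap.ker (α j) → α j (x y) = α j (s (collapse y))) ∧
      (∀ y i, α i (x y) = 0 → α i (v y) ≠ 0) ∧
      (∀ y j, X ≤ LinearMap.ker (α j) → α j (x y) = 0 → 0 < ε j * α j (v y)) ∧
      ∀ y : sphere (0 : ℝ × E) 1, 1 ≤ bottomDist y.1 → x y = s (1, 0) ∧ v y = b := by
  classical
  obtain ⟨x, hxX, hxker, hxtop⟩ := exists_continuousMap_sub_collapse_mem α X s
  have hαx (w : ℝ × E) {j : ι} (hj : X ≤ LinearMap.ker (α j)) :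
      α j (x w) = α j (s (collapse w)) := by
    simpa [sub_eq_zero] using hj (hxX w)
  let η (i : ι) : ℝ := if X ≤ LinearMap.ker (α i) then ε i else α i (s (1, 0))
  have hfeas (y : sphere (0 : ℝ × E) 1) : ∃ v, ∀ i, α i (x y) = 0 → 0 < η i * α i v := by
    rcases le_total (bottomDist y.1) (1 / 2) with hy | hy
    · obtain ⟨v, hv⟩ := hcons _ (collapse_ne_zero_of_mem_sphere y.2)
      refine ⟨v, fun i hi => ?_⟩
      have hker : X ≤ LinearMap.ker (α i) := not_not.1 fun h => hxker y hy i h hi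
      simpa [η, hker] using hv i hker (hαx y hker ▸ hi)
    · refine ⟨s (1, 0), fun i hi => ?_⟩
      have hker : ¬ X ≤ LinearMap.ker (α i) := fun h => hs i <| by
        rw [← hi, hαx _ h, collapse_of_half_le_bottomDist hy]
      simpa [η, hker] using hs i
  obtain ⟨v, hv, hvtop⟩ := exists_continuousMap_forall_pos
    (g := fun i (y : sphere (0 : ℝ × E) 1) => α i (x y)) (φ := fun i => η i • α i)
    (D := {y | 1 ≤ bottomDist y.1})
    (fun i => (α i).continuous_of_finiteDimensional.comp (by fun_prop))
    (isClosed_le continuous_const (by fun_prop)) (fun y hy i => by simpa [hxtop y hy] using hs i)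
    (fun y _ => hfeas y) b
  refine ⟨x.restrict _, v, fun y j hj => hαx y hj, fun y i hi => ?_, fun y j hj hjx => ?_,
    fun y hy => ⟨hxtop y hy, hvtop y hy⟩⟩
  · exact right_ne_zero_of_mul (hv y i hi).ne'
  · simpa [η, hj] using hv y j hjx

end SphericalFamily

section CubicalSpheres

open Metric Set

/-- The affine map `[-1, 1] → [0, 1]`, extended to the line by constants. -/
def toUnitInterval (u : ℝ) : unitInterval := projIcc 0 1 zero_le_one ((u + 1) / 2)

@[fun_prop]
theorem continuous_toUnitInterval : Continuous toUnitInterval :=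
  continuous_projIcc.comp (by fun_prop)

theorem toUnitInterval_of_one_le {u : ℝ} (hu : 1 ≤ u) : toUnitInterval u = 1 :=
  projIcc_of_right_le zero_le_one (by linarith)

theorem toUnitInterval_of_le_neg_one {u : ℝ} (hu : u ≤ -1) : toUnitInterval u = 0 :=
  projIcc_of_le_left zero_le_one (by linarith)

theorem two_mul_toUnitInterval_sub_one {u : ℝ} (hu : |u| ≤ 1) :
    2 * (toUnitInterval u : ℝ) - 1 = u := by
  rw [abs_le] at hu
  rw [toUnitInterval, projIcc_of_mem zero_le_one ⟨by linarith, by linarith⟩]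
  ring

variable {N : Type*} [Fintype N]

theorem toUnitInterval_comp_mem_boundary {y : N → ℝ} (hy : 1 ≤ ‖y‖) :
    (fun i => toUnitInterval (y i)) ∈ Cube.boundary N := by
  obtain ⟨i, hi⟩ : ∃ i, 1 ≤ |y i| := by
    by_contra! h
    exact hy.not_gt ((pi_norm_lt_iff one_pos).2 h)
  rcases le_abs'.1 hi with h | h
  · exact ⟨i, .inl (toUnitInterval_of_le_neg_one h)⟩
  · exact ⟨i, .inr (toUnitInterval_of_one_le h)⟩

/-- The parametrisation of the bottom face of the cylinder `[-1, 1] × [-1, 1] ^ N` by the unit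
cube. -/
def bottomFace (t : N → unitInterval) : sphere (0 : ℝ × (N → ℝ)) 1 :=
  ⟨(-1, fun i => 2 * (t i : ℝ) - 1), by
    rw [mem_sphere_zero_iff_norm, Prod.norm_mk, norm_neg, norm_one]
    refine max_eq_left ((pi_norm_le_iff_of_nonneg zero_le_one).2 fun i => abs_le.2 ⟨?_, ?_⟩)
    · linarith [(t i).2.1]
    · linarith [(t i).2.2]⟩

@[fun_prop]
theorem continuous_bottomFace :
    Continuous (bottomFace : (N → unitInterval) → sphere (0 : ℝ × (N → ℝ)) 1) :=
  Continuous.subtype_mk (by fun_prop) _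

theorem bottomFace_toUnitInterval {x : ℝ × (N → ℝ)} (hx : x ∈ sphere 0 1) (hbot : x.1 = -1) :
    bottomFace (fun i => toUnitInterval (x.2 i)) = ⟨x, hx⟩ := by
  refine Subtype.ext (Prod.ext hbot.symm (funext fun i => two_mul_toUnitInterval_sub_one ?_))
  exact (norm_le_pi_norm x.2 i).trans ((norm_snd_le x).trans (mem_sphere_zero_iff_norm.1 hx).le)

theorem one_le_bottomDist_bottomFace {t : N → unitInterval} (ht : t ∈ Cube.boundary N) :
    1 ≤ bottomDist (bottomFace t).1 := by
  refine le_trans ?_ (norm_snd_le_bottomDist _)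
  obtain ⟨i, hi⟩ := ht
  refine le_trans ?_ (norm_le_pi_norm (bottomFace t).1.2 i)
  rcases hi with h | h <;> norm_num [bottomFace, h]

theorem exists_extension_of_subsingleton_homotopyGroup {X : Type*} [TopologicalSpace X] {x₀ : X}
    [hπ : Subsingleton (HomotopyGroup N X x₀)] (f : C(sphere (0 : ℝ × (N → ℝ)) 1, X))
    (hf : ∀ x : sphere (0 : ℝ × (N → ℝ)) 1, 1 ≤ bottomDist x.1 → f x = x₀) :
    ∃ F : C(ℝ × (N → ℝ), X), ∀ x : sphere (0 : ℝ × (N → ℝ)) 1, F x = f x := by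
  let g : GenLoop N X x₀ :=
    ⟨f.comp ⟨bottomFace, by fun_prop⟩, fun t ht => hf _ (one_le_bottomDist_bottomFace ht)⟩
  obtain ⟨H⟩ : GenLoop.Homotopic g GenLoop.const :=
    Quotient.exact (s := GenLoop.Homotopic.setoid N x₀) (hπ.elim _ _)
  refine ⟨⟨fun x => H (toUnitInterval x.1, fun i => toUnitInterval (x.2 i)), by fun_prop⟩, ?_⟩
  rintro ⟨x, hx⟩
  change H _ = _
  by_cases hbot : x.1 = -1
  · rw [toUnitInterval_of_le_neg_one hbot.le, H.apply_zero]
    exact congrArg f (bottomFace_toUnitInterval hx hbot)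
  have hdist := one_le_bottomDist_of_mem_sphere hx hbot
  rw [hf ⟨x, hx⟩ hdist]
  rcases le_max_iff.1 hdist with hside | htop
  · have hboundary := toUnitInterval_comp_mem_boundary hside
    rw [H.eq_fst _ hboundary]
    exact g.2 _ hboundary
  · rw [toUnitInterval_of_one_le (by linarith), H.apply_one]
    rfl

end CubicalSpheres

section Complexification

variable {ℓ n : ℕ}

theorem re_cLin (φ : Vsp ℓ →ₗ[ℝ] ℝ) (z : Fin ℓ → ℂ) :
    (cLin φ z).re = φ (WithLp.toLp 2 fun j => (z j).re) := by
  simp [cLin]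

theorem im_cLin (φ : Vsp ℓ →ₗ[ℝ] ℝ) (z : Fin ℓ → ℂ) :
    (cLin φ z).im = φ (WithLp.toLp 2 fun j => (z j).im) := by
  simp [cLin]

theorem re_cLin_cplx (φ : Vsp ℓ →ₗ[ℝ] ℝ) (x v : Vsp ℓ) : (cLin φ (cplx x v)).re = φ x := by
  rw [re_cLin]
  congr 1
  ext j
  simp [cplx]

theorem im_cLin_cplx (φ : Vsp ℓ →ₗ[ℝ] ℝ) (x v : Vsp ℓ) : (cLin φ (cplx x v)).im = φ v := by
  rw [im_cLin]
  congr 1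
  ext j
  simp [cplx]

theorem exists_cplx_eq (z : Fin ℓ → ℂ) : ∃ x v : Vsp ℓ, cplx x v = z :=
  ⟨WithLp.toLp 2 fun j => (z j).re, WithLp.toLp 2 fun j => (z j).im, funext fun j => by
    rw [cplx, mul_comm, Complex.re_add_im]⟩

theorem cLin_smul (φ : Vsp ℓ →ₗ[ℝ] ℝ) (w : ℂ) (z : Fin ℓ → ℂ) :
    cLin φ (w • z) = w * cLin φ z := by
  obtain ⟨x, v, rfl⟩ := exists_cplx_eq z
  have hsmul : w • cplx x v = cplx (w.re • x - w.im • v) (w.re • v + w.im • x) := by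
    ext j
    apply Complex.ext <;> simp [cplx]
  rw [hsmul]
  apply Complex.ext <;> simp [re_cLin_cplx, im_cLin_cplx]

@[fun_prop]
theorem continuous_cLin (φ : Vsp ℓ →ₗ[ℝ] ℝ) : Continuous (cLin φ) := by
  have hφ : Continuous φ := φ.continuous_of_finiteDimensional
  unfold cLin
  fun_prop

theorem sum_mul_cLin_eq_zero {C : Type*} [Fintype C] {φ : C → Vsp ℓ →ₗ[ℝ] ℝ} {μ : C → ℝ}
    (hφ : ∑ j, μ j • φ j = 0) (z : Fin ℓ → ℂ) : ∑ j, (μ j : ℂ) * cLin (φ j) z = 0 := by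
  have hsum (x : Vsp ℓ) : ∑ j, μ j * φ j x = 0 := by simpa using LinearMap.congr_fun hφ x
  apply Complex.ext <;> simp [re_cLin, im_cLin, hsum]

variable {α : Fin n → (Vsp ℓ →ₗ[ℝ] ℝ)}

theorem smul_mem_MA {w : ℂ} (hw : w ≠ 0) {z : Fin ℓ → ℂ} (hz : z ∈ MA α) : w • z ∈ MA α :=
  fun i => cLin_smul (α i) w z ▸ mul_ne_zero hw (hz i)

theorem cplx_mem_MA {x v : Vsp ℓ} (h : ∀ i, α i x = 0 → α i v ≠ 0) : cplx x v ∈ MA α :=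
  fun i h0 => h i (by rw [← re_cLin_cplx (α i) x v, h0, Complex.zero_re])
    (by rw [← im_cLin_cplx (α i) x v, h0, Complex.zero_im])

theorem exists_ne_zero_forall_re_mul_ne_zero {ι : Type*} [Finite ι] {c : ι → ℂ}
    (hc : ∀ i, c i ≠ 0) : ∃ w : ℂ, w ≠ 0 ∧ ∀ i, (w * c i).re ≠ 0 := by
  let c' : Option ι → ℂ := fun o => o.elim 1 c
  have hc' : ∀ o, c' o ≠ 0 := Option.rec one_ne_zero hc
  obtain ⟨w, hw⟩ := Module.Dual.exists_forall_ne_zero_of_forall_exists (K := ℝ) (M := ℂ)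
    (fun o => Complex.reLm ∘ₗ LinearMap.mulRight ℝ (c' o)) fun o => ⟨(c' o)⁻¹, by simp [hc' o]⟩
  refine ⟨w, ?_, fun i => hw (some i)⟩
  rintro rfl
  simpa using hw none

theorem exists_cplx_eq_smul_of_mem_MA {z : Fin ℓ → ℂ} (hz : z ∈ MA α) :
    ∃ w : ℂ, w ≠ 0 ∧ ∃ a b : Vsp ℓ, cplx a b = w • z ∧ ∀ i, α i a ≠ 0 := by
  obtain ⟨w, hw, hre⟩ := exists_ne_zero_forall_re_mul_ne_zero hz
  obtain ⟨a, b, hab⟩ := exists_cplx_eq (w • z)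
  refine ⟨w, hw, a, b, hab, fun i => ?_⟩
  rw [← re_cLin_cplx (α i) a b, hab, cLin_smul]
  exact hre i

end Complexification

section Nontriviality

open Metric

variable {ℓ n k : ℕ} {α : Fin n → (Vsp ℓ →ₗ[ℝ] ℝ)} {ε : Fin n → ℝ}

theorem exists_filling_of_subsingleton_pi {x₀ : MA α}
    [Subsingleton (HomotopyGroup.Pi k (MA α) x₀)] {w : ℂ} (hw : w ≠ 0)
    {x v : C(sphere (0 : ℝ × (Fin k → ℝ)) 1, Vsp ℓ)} (hxv : ∀ y i, α i (x y) = 0 → α i (v y) ≠ 0)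
    (hbase : ∀ y : sphere (0 : ℝ × (Fin k → ℝ)) 1, 1 ≤ bottomDist y.1 →
      cplx (x y) (v y) = w • x₀.1) :
    ∃ Z : ℝ × (Fin k → ℝ) → Fin ℓ → ℂ, Continuous Z ∧ (∀ y, Z y ∈ MA α) ∧
      ∀ y : sphere (0 : ℝ × (Fin k → ℝ)) 1, Z y = cplx (x y) (v y) := by
  let f : C(sphere (0 : ℝ × (Fin k → ℝ)) 1, MA α) :=
    ⟨fun y => ⟨w⁻¹ • cplx (x y) (v y), smul_mem_MA (inv_ne_zero hw) (cplx_mem_MA (hxv y))⟩, by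
      unfold cplx
      fun_prop⟩
  have hf (y : sphere (0 : ℝ × (Fin k → ℝ)) 1) (hy : 1 ≤ bottomDist y.1) : f y = x₀ :=
    Subtype.ext (by simp only [f, ContinuousMap.coe_mk, hbase y hy, inv_smul_smul₀ hw])
  have : Subsingleton (HomotopyGroup (Fin k) (MA α) x₀) := ‹_›
  obtain ⟨F, hF⟩ := exists_extension_of_subsingleton_homotopyGroup f hf
  refine ⟨fun y => w • (F y).1, by fun_prop, fun y => smul_mem_MA hw (F y).2, fun y => ?_⟩
  simp only [hF, f, ContinuousMap.coe_mk, smul_inv_smul₀ hw]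

theorem IsPositiveCircuit.not_exists_filling {C : Finset (Fin n)} {lam : C → ℝ}
    (hγ : IsPositiveCircuit (fun j : C => ε j • α j) lam) (hε : ∀ i, ε i ≠ 0)
    {W : Type*} [NormedAddCommGroup W] [NormedSpace ℝ W] [FiniteDimensional ℝ W]
    (hW : 1 < Module.finrank ℝ W) (e : W ≃ₗ[ℝ] sumZero C) {Q : W → W} (hQ : Continuous Q)
    (hQid : ∀ y ∈ sphere (0 : W) 1, (0 : W) ∉ segment ℝ (Q y) y) :
    ¬ ∃ Z : W → Fin ℓ → ℂ, Continuous Z ∧ (∀ y, Z y ∈ MA α) ∧ ∀ y ∈ sphere (0 : W) 1,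
      ∀ j : C, (e (Q y) : C → ℝ) j = lam j * (ε j * (cLin (α j) (Z y)).re) ∧
        ((cLin (α j) (Z y)).re = 0 → 0 < ε j * (cLin (α j) (Z y)).im) := by
  rintro ⟨Z, hZ, hZmem, hsphere⟩
  let μ (j : C) : ℝ := lam j * ε j
  have hμ (j : C) : μ j ≠ 0 := mul_ne_zero (hγ.pos j).ne' (hε j)
  have hrel : ∑ j : C, μ j • α j = 0 := by
    simpa only [μ, smul_smul] using hγ.sum_smul_eq_zero
  obtain ⟨y, hy⟩ := exists_sum_ne_zero_of_sphere hW e hQ hQid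
    (ζ := fun y j => μ j * cLin (α j) (Z y)) (by fun_prop)
    (fun y j => mul_ne_zero (Complex.ofReal_ne_zero.2 (hμ j)) (hZmem y j))
    (fun y hy j => by rw [Complex.re_ofReal_mul, (hsphere y hy j).1, mul_assoc])
    (fun y hy j hj => by
      rw [Complex.re_ofReal_mul] at hj
      rw [Complex.im_ofReal_mul, mul_assoc]
      exact mul_pos (hγ.pos j) ((hsphere y hy j).2 ((mul_eq_zero.1 hj).resolve_left (hμ j))))
  exact hy (sum_mul_cLin_eq_zero hrel (Z y))

theorem ne_zero_of_mem_SigmaFilt (hmem : ε ∈ SigmaFilt ℓ α k) (i : Fin n) : ε i ≠ 0 := by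
  rcases hmem.1 i with h | h <;> simp [h]

theorem notMem_interKer_of_not_consistentAt {I : Finset (Fin n)} (hI : ¬ ConsistentAt α ε I)
    {a : Vsp ℓ} (ha : ∀ i, α i a ≠ 0) : a ∉ interKer α I := fun haI =>
  hI ⟨0, fun j hj => absurd (hj haI) (ha j)⟩

theorem iInf_ker_smul_eq_interKer (hε : ∀ i, ε i ≠ 0) (C : Finset (Fin n)) :
    ⨅ j : C, LinearMap.ker (ε j • α j) = interKer α C := by
  simp only [LinearMap.ker_smul _ _ (hε _), interKer, iInf_subtype]

theorem exists_circuit_section_of_gap (hmem : ε ∈ SigmaFilt ℓ α k)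
    (hnotmem : ε ∉ SigmaFilt ℓ α (k + 1)) {a : Vsp ℓ} (ha : ∀ i, α i a ≠ 0) :
    ∃ (C : Finset (Fin n)) (lam : C → ℝ) (s : ℝ × (Fin k → ℝ) →ₗ[ℝ] Vsp ℓ)
      (e : (ℝ × (Fin k → ℝ)) ≃ₗ[ℝ] sumZero C),
      IsPositiveCircuit (fun j : C => ε j • α j) lam ∧ s (1, 0) = a ∧
      (∀ w j, (e w : C → ℝ) j = lam j * (ε j * α j (s w))) ∧
      ∀ w ≠ 0, ∃ v, ∀ j, interKer α C ≤ LinearMap.ker (α j) → α j (s w) = 0 →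
        0 < ε j * α j v := by
  obtain ⟨I, hI, hdim, hcons⟩ := exists_not_consistentAt_of_gap hmem hnotmem
  obtain ⟨C, hCI, lam, hγ⟩ := exists_isPositiveCircuit_of_not_consistentAt hI hcons
  have hker := (iInf_ker_smul_eq_interKer (α := α) (ne_zero_of_mem_SigmaFilt hmem) C).trans hCI
  obtain ⟨s, e, hsa, hes⟩ := hγ.exists_section (W := ℝ × (Fin k → ℝ)) (w₀ := (1, 0)) (a := a)
    (by
      rw [hker, Module.finrank_prod, Module.finrank_self, Module.finrank_fin_fun,
        finrank_euclideanSpace_fin]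
      omega) (by simp) (hker ▸ notMem_interKer_of_not_consistentAt hI ha)
  refine ⟨C, lam, s, e, hγ, hsa, hes, fun w hw => hCI ▸ ?_⟩
  refine exists_forall_pos_of_notMem_interKer hcons fun hsw => hw ?_
  rw [← hCI, mem_interKer] at hsw
  refine e.map_eq_zero_iff.1 (Subtype.ext (funext fun j => ?_))
  simp [hes, hsw j j.2]

theorem gap_in_filtration_nontrivial_pi_general {ℓ n k : ℕ} {α : Fin n → (Vsp ℓ →ₗ[ℝ] ℝ)}
    (hk : 1 ≤ k) {ε : Fin n → ℝ} (hmem : ε ∈ SigmaFilt ℓ α k)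
    (hnotmem : ε ∉ SigmaFilt ℓ α (k + 1)) (x₀ : MA α) :
    Nontrivial (HomotopyGroup.Pi k (MA α) x₀) := by
  refine not_subsingleton_iff_nontrivial.1 fun _ => ?_
  obtain ⟨w, hw, a, b, hab, ha⟩ := exists_cplx_eq_smul_of_mem_MA x₀.2
  obtain ⟨C, lam, s, e, hγ, hsa, hes, hcons⟩ := exists_circuit_section_of_gap hmem hnotmem ha
  obtain ⟨x, v, hx, hxv, hpos, hbase⟩ := exists_spherical_family (by rwa [hsa]) hcons b
  obtain ⟨Z, hZ, hZmem, hZsphere⟩ := exists_filling_of_subsingleton_pi hw hxv fun y hy => by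
    rw [(hbase y hy).1, (hbase y hy).2, hsa, hab]
  have hCker (j : C) : interKer α C ≤ LinearMap.ker (α j) := fun x hx => mem_interKer.1 hx j j.2
  have hrank : 1 < Module.finrank ℝ (ℝ × (Fin k → ℝ)) := by
    rw [Module.finrank_prod, Module.finrank_self, Module.finrank_fin_fun]
    omega
  refine hγ.not_exists_filling (ne_zero_of_mem_SigmaFilt hmem) hrank e continuous_collapse
    (fun y hy => zero_notMem_segment_collapse hy) ⟨Z, hZ, hZmem, fun y hy j => ?_⟩
  rw [hZsphere ⟨y, hy⟩, re_cLin_cplx, im_cLin_cplx]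
  exact ⟨by rw [hes, hx _ _ (hCker j)], hpos _ _ (hCker j)⟩

end Nontriviality

/-- A gap in the consistency filtration forces a nonvanishing homotopy group:
if some sign vector lies in `Σ_k ∖ Σ_{k+1}` with `k ≥ 2`, then `π_k(M(A)) ≠ 0`. -/
theorem gap_in_filtration_nontrivial_pi (ℓ n : ℕ)
    (α : Fin n → (Vsp ℓ →ₗ[ℝ] ℝ))
    (hα : ∀ i, α i ≠ 0)
    (hess : (⋂ i, (LinearMap.ker (α i) : Set (Vsp ℓ))) = {0})
    (k : ℕ) (hk : 2 ≤ k)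
    (ε : Fin n → ℝ) (hε : ∀ i, ε i = 1 ∨ ε i = -1)
    (hmem : ε ∈ SigmaFilt ℓ α k) (hnotmem : ε ∉ SigmaFilt ℓ α (k + 1)) :
    ∀ x₀ : MA α, Nontrivial (HomotopyGroup.Pi k (MA α) x₀) := by
  exact gap_in_filtration_nontrivial_pi_general (by omega) hmem hnotmem
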